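/- arXiv:1811.05257 — 2 statements merged into one kernel-verified Lean document; each statement's English description precedes it below -/
import Mathlib

section
/- Let p be an odd prime, F/ℚ_p a finite unramified extension, and a₁, ..., a_n ∈ 𝒪_F \ 𝒪_F^p satisfying the Kummer independence condition [a_i]_F ∉ ⟨[a₁]_F, ..., [a_{i−1}]_F⟩ in F*/(F*)^p for all i ≥ 2. Then for all integers r ≥ 1 and s₁, ..., s_n ≥ 0, the extension F(ζ_{p^r}, a₁^{1/p^{s₁}}, ..., a_n^{1/p^{s_n}})/F is totally ramified. -/
/-- The `ℤ_[p]`-algebra structure on a field `L` over `ℚ_[p]`. -/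
noncomputable def padicIntAlgebra (p : ℕ) [Fact p.Prime] (L : Type*) [Field L]
    [Algebra ℚ_[p] L] : Algebra ℤ_[p] L :=
  ((algebraMap ℚ_[p] L).comp (algebraMap ℤ_[p] ℚ_[p])).toAlgebra

/-- The ring of integers of a `p`-adic field `L`, i.e. the integral closure of `ℤ_[p]` in `L`. -/
noncomputable def ringOfInt (p : ℕ) [Fact p.Prime] (L : Type*) [Field L]
    [Algebra ℚ_[p] L] : Subring L :=
  letI := padicIntAlgebra p L
  (integralClosure ℤ_[p] L).toSubring

/-- The maximal ideal of the ring of integers of `L` (its Jacobson radical). -/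
noncomputable def maxIdeal (p : ℕ) [Fact p.Prime] (L : Type*) [Field L]
    [Algebra ℚ_[p] L] : Ideal (ringOfInt p L) :=
  (⊥ : Ideal (ringOfInt p L)).jacobson

/-- The `i`-th ramification group (in lower numbering) of `L/K`, as a subset of `Gal(L/K)`:
`σ ∈ G_i` iff `σ x - x ∈ 𝔭_L ^ (i+1)` for every `x` in the ring of integers of `L`. -/
noncomputable def ramSet (p : ℕ) [Fact p.Prime] (K L : Type*) [Field K] [Field L]
    [Algebra ℚ_[p] L] [Algebra K L] (i : ℕ) : Set (L ≃ₐ[K] L) :=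
  {σ | ∀ x : ringOfInt p L, ∃ y ∈ maxIdeal p L ^ (i + 1), (y : L) = σ (x : L) - (x : L)}

/-- `t` is a ramification jump of `L/K` if `G_t ≠ G_{t+1}`. -/
noncomputable def IsRamJump (p : ℕ) [Fact p.Prime] (K L : Type*) [Field K] [Field L]
    [Algebra ℚ_[p] L] [Algebra K L] (t : ℕ) : Prop :=
  ramSet p K L t ≠ ramSet p K L (t + 1)

/-- `L/K` has a unique ramification jump, equal to `t`. -/
noncomputable def HasUniqueRamJump (p : ℕ) [Fact p.Prime] (K L : Type*) [Field K] [Field L]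
    [Algebra ℚ_[p] L] [Algebra K L] (t : ℕ) : Prop :=
  IsRamJump p K L t ∧ ∀ t', IsRamJump p K L t' → t' = t

/-- Same as `HasUniqueRamJump`, with the `K`-algebra structure on `L` given by an
explicit ring homomorphism. -/
noncomputable def HasUniqueRamJumpHom (p : ℕ) [Fact p.Prime] (K L : Type*) [Field K] [Field L]
    [Algebra ℚ_[p] L] (f : K →+* L) (t : ℕ) : Prop :=
  letI := f.toAlgebra
  HasUniqueRamJump p K L t

/-- The absolute ramification index `e(L|ℚ_p)`, i.e. the valuation of `p` in `L`. -/
noncomputable def eAbs (p : ℕ) [Fact p.Prime] (L : Type*) [Field L] [Algebra ℚ_[p] L] : ℕ :=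
  sSup {n : ℕ | Ideal.span {(p : ringOfInt p L)} ≤ maxIdeal p L ^ n}

/-- The normalized valuation `v_L(x)` of an integral element `x` of `L`. -/
noncomputable def valInt (p : ℕ) [Fact p.Prime] (L : Type*) [Field L] [Algebra ℚ_[p] L]
    (x : L) : ℕ :=
  sSup {n : ℕ | ∃ y ∈ maxIdeal p L ^ n, (y : L) = x}

section Auxiliary

open IsLocalRing Polynomial

theorem isAdicComplete_span_singleton_of_norm_lt_one {L : Type*} [NormedField L] [CompleteSpace L]
    (O : Subring L) (hO : ∀ x, x ∈ O ↔ ‖x‖ ≤ 1) (ϖ : O) (h0 : ϖ ≠ 0) (h1 : ‖(ϖ : L)‖ < 1) :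
    IsAdicComplete (Ideal.span {ϖ}) O := by
  have h0' : (ϖ : L) ≠ 0 := by simpa using h0
  have hpos : 0 < ‖(ϖ : L)‖ := norm_pos_iff.mpr h0'
  have hmem : ∀ (n : ℕ) (x : O), x ∈ Ideal.span {ϖ} ^ n ↔ ‖(x : L)‖ ≤ ‖(ϖ : L)‖ ^ n := by
    intro n x
    rw [Ideal.span_singleton_pow, Ideal.mem_span_singleton]
    constructor
    · rintro ⟨y, rfl⟩
      have hy := (hO y).1 y.2
      simp only [Subring.coe_mul, Subring.coe_pow, norm_mul, norm_pow]
      exact mul_le_of_le_one_right (by positivity) hy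
    · intro hx
      refine ⟨⟨(x : L) / (ϖ : L) ^ n, (hO _).2 ?_⟩, ?_⟩
      · rw [norm_div, norm_pow]
        exact div_le_one_of_le₀ hx (by positivity)
      · ext
        simp only [Subring.coe_mul, Subring.coe_pow]
        field_simp
  have hclosed : IsClosed (O : Set L) := by
    have : (O : Set L) = {x | ‖x‖ ≤ 1} := by ext x; exact hO x
    rw [this]
    exact isClosed_le continuous_norm continuous_const
  have hadic : IsAdic (Ideal.span {ϖ}) := by
    rw [isAdic_iff]
    constructor
    · intro n
      refine AddSubgroup.isOpen_of_mem_nhds (Submodule.toAddSubgroup (Ideal.span {ϖ} ^ n))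
        (g := 0) ?_
      refine Filter.mem_of_superset (Metric.ball_mem_nhds (0 : O) (pow_pos hpos n)) ?_
      intro x hx
      have : ‖(x : L)‖ < ‖(ϖ : L)‖ ^ n := by
        simpa using hx
      exact (hmem n x).2 this.le
    · intro s hs
      obtain ⟨ε, hε, hs⟩ := Metric.mem_nhds_iff.1 hs
      obtain ⟨n, hn⟩ := exists_pow_lt_of_lt_one hε h1
      refine ⟨n, fun x hx => hs ?_⟩
      have := ((hmem n x).1 hx).trans_lt hn
      simpa using this
  rw [hadic.isAdicComplete_iff]
  exact ⟨hclosed.completeSpace_coe, inferInstance⟩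

/-- The fundamental identity `e * f = n` for a local Dedekind domain finite over `ℤ_[p]`. -/
theorem exists_card_residueField_and_ramification_mul_eq (p : ℕ) [Fact p.Prime]
    (S : Type*) [CommRing S] [IsDedekindDomain S] [IsLocalRing S] [Algebra ℤ_[p] S]
    [Module.Finite ℤ_[p] S] [Module.IsTorsionFree ℤ_[p] S] :
    ∃ f : ℕ, Nat.card (ResidueField S) = p ^ f ∧
      sSup {n : ℕ | Ideal.span {(p : S)} ≤ maximalIdeal S ^ n} * f = Module.finrank ℤ_[p] S := by
  have hne : maximalIdeal ℤ_[p] ≠ ⊥ := by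
    rw [PadicInt.maximalIdeal_eq_span_p]
    simp [(Fact.out : p.Prime).ne_zero]
  have hlo : (maximalIdeal S).LiesOver (maximalIdeal ℤ_[p]) := inferInstance
  have hover : (maximalIdeal ℤ_[p]).primesOver S = {maximalIdeal S} := by
    ext P
    constructor
    · rintro ⟨hP, hPo⟩
      have := Ideal.IsMaximal.of_liesOver_isMaximal P (maximalIdeal ℤ_[p])
      exact eq_maximalIdeal this
    · rintro rfl
      exact ⟨inferInstance, hlo⟩
  refine ⟨(maximalIdeal S).inertiaDeg ℤ_[p], ?_, ?_⟩
  · have h := Ideal.cardQuot_pow_inertiaDeg (maximalIdeal ℤ_[p]) (maximalIdeal S)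
    have hp : (maximalIdeal ℤ_[p]).cardQuot = p := by
      have := Nat.card_congr (PadicInt.residueField (p := p)).toEquiv
      rw [Nat.card_zmod] at this
      exact this
    rw [hp] at h
    exact h.symm
  · have : Fintype ((maximalIdeal ℤ_[p]).primesOver S) := by
      rw [hover]; exact Set.fintypeSingleton _
    have h := Ideal.sum_ramification_inertia_eq_finrank (maximalIdeal ℤ_[p]) S
    have e : sSup {n : ℕ | Ideal.span {(p : S)} ≤ maximalIdeal S ^ n} =
        (maximalIdeal S).ramificationIdx ℤ_[p] := by
      rw [← Ideal.ramificationIdx'_eq_ramificationIdx (maximalIdeal ℤ_[p]) _ hne]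
      unfold Ideal.ramificationIdx'
      rw [PadicInt.maximalIdeal_eq_span_p, Ideal.map_span]
      simp
    rw [e, ← h]
    symm
    have hm : maximalIdeal S ∈ (maximalIdeal ℤ_[p]).primesOver S := by rw [hover]; rfl
    refine Fintype.sum_eq_single (⟨maximalIdeal S, hm⟩ : (maximalIdeal ℤ_[p]).primesOver S) ?_
    rintro ⟨x, hx⟩ hne
    rw [hover] at hx
    exact absurd (Subtype.ext (Set.mem_singleton_iff.1 hx)) hne

theorem exists_isPrimitiveRoot_card_residueField_sub_one (S : Type*) [CommRing S] [IsDomain S]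
    [HenselianLocalRing S] [Finite (ResidueField S)] :
    ∃ ξ : S, IsPrimitiveRoot ξ (Nat.card (ResidueField S) - 1) := by
  classical
  have := Fintype.ofFinite (ResidueField S)
  set q := Nat.card (ResidueField S) with hq
  have hq1 : 1 < q := Finite.one_lt_card
  obtain ⟨g, hg⟩ := IsCyclic.exists_generator (α := (ResidueField S)ˣ)
  have hord : orderOf g = q - 1 := by
    rw [orderOf_eq_card_of_forall_mem_zpowers hg, Nat.card_units]
  have hgpow : (g : ResidueField S) ^ (q - 1) = 1 := by
    rw [← hord, ← Units.val_pow_eq_pow_val, pow_orderOf_eq_one, Units.val_one]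
  have hqz : (q : ResidueField S) = 0 := by
    rw [hq, Nat.card_eq_fintype_card, FiniteField.cast_card_eq_zero]
  have T : ∀ f : S[X], f.Monic → ∀ a₀ : ResidueField S, aeval a₀ f = 0 →
      aeval a₀ (derivative f) ≠ 0 → ∃ a : S, f.IsRoot a ∧ residue S a = a₀ :=
    ((HenselianLocalRing.TFAE S).out 0 1).1 ‹_›
  have H := T (X ^ (q - 1) - 1)
    (monic_X_pow_sub_C 1 (by lia)) (g : ResidueField S) (by simp [hgpow]) (by
      have : ((q - 1 : ℕ) : ResidueField S) ≠ 0 := by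
        rw [Nat.cast_sub hq1.le, hqz]; simp
      simp [derivative_X_pow, this])
  obtain ⟨ξ, hξ, hres⟩ := H
  refine ⟨ξ, ?_, ?_⟩
  · simpa [sub_eq_zero] using hξ
  · intro l hl
    rw [← hord]
    apply orderOf_dvd_of_pow_eq_one
    ext
    simp [← hres, ← map_pow, hl]

theorem IsPrimitiveRoot.dvd_card_residueField_sub_one {S : Type*} [CommRing S] [IsDomain S]
    [IsLocalRing S] [Finite (ResidueField S)] {n : ℕ} (hn : (n : ResidueField S) ≠ 0) {ξ : S}
    (hξ : IsPrimitiveRoot ξ n) : n ∣ Nat.card (ResidueField S) - 1 := by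
  have := Fintype.ofFinite (ResidueField S)
  have : NeZero (n : ResidueField S) := ⟨hn⟩
  have hn0 : 0 < n := Nat.pos_of_ne_zero (by rintro rfl; simp at hn)
  have h1 := (hξ.isRoot_cyclotomic hn0).map (f := residue S)
  rw [map_cyclotomic, isRoot_cyclotomic_iff] at h1
  apply h1.dvd_of_pow_eq_one
  rw [Nat.card_eq_fintype_card]
  exact FiniteField.pow_card_sub_one_eq_one _ (h1.ne_zero hn0.ne')

section PadicField

variable (p : ℕ) [Fact p.Prime] (L : Type*) [Field L] [Algebra ℚ_[p] L]

theorem mem_ringOfInt_iff_spectralNorm_le_one [FiniteDimensional ℚ_[p] L] (x : L) :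
    x ∈ ringOfInt p L ↔ spectralNorm ℚ_[p] L x ≤ 1 := by
  let := padicIntAlgebra p L
  have : IsScalarTower ℤ_[p] ℚ_[p] L := IsScalarTower.of_algebraMap_eq fun _ => rfl
  have hx : IsIntegral ℚ_[p] x := Algebra.IsIntegral.isIntegral x
  change IsIntegral ℤ_[p] x ↔ spectralValue (minpoly ℚ_[p] x) ≤ 1
  rw [spectralValue_le_one_iff (minpoly.monic hx)]
  constructor
  · intro h n
    rw [minpoly.isIntegrallyClosed_eq_field_fractions' ℚ_[p] h, coeff_map]
    exact ((minpoly ℤ_[p] x).coeff n).2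
  · intro h
    have hl : minpoly ℚ_[p] x ∈ lifts (algebraMap ℤ_[p] ℚ_[p]) := by
      rw [lifts_iff_coeff_lifts]
      exact fun n => ⟨⟨_, h n⟩, rfl⟩
    obtain ⟨q, hq, -, hm⟩ := lifts_and_degree_eq_and_monic hl (minpoly.monic hx)
    refine ⟨q, hm, ?_⟩
    have := minpoly.aeval ℚ_[p] x
    rw [← hq, aeval_map_algebraMap] at this
    exact this

theorem isUnit_ringOfInt_iff [FiniteDimensional ℚ_[p] L] (x : ringOfInt p L) :
    IsUnit x ↔ spectralNorm ℚ_[p] L x = 1 := by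
  let := spectralNorm.normedField ℚ_[p] L
  have hO : ∀ x, x ∈ ringOfInt p L ↔ ‖x‖ ≤ 1 := mem_ringOfInt_iff_spectralNorm_le_one p L
  change _ ↔ ‖(x : L)‖ = 1
  constructor
  · rintro ⟨u, rfl⟩
    have h := congrArg (fun y : ringOfInt p L => ‖(y : L)‖) u.mul_inv
    simp only [Subring.coe_mul, norm_mul, Subring.coe_one, norm_one] at h
    have h1 := (hO _).1 (u : ringOfInt p L).2
    have h2 := (hO _).1 ((u⁻¹ : (ringOfInt p L)ˣ) : ringOfInt p L).2
    exact le_antisymm h1 (by nlinarith [norm_nonneg ((u : ringOfInt p L) : L)])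
  · intro h
    have h0 : (x : L) ≠ 0 := norm_ne_zero_iff.1 (by rw [h]; exact one_ne_zero)
    refine IsUnit.of_mul_eq_one ⟨(x : L)⁻¹, (hO _).2 (by rw [norm_inv, h, inv_one])⟩ ?_
    ext
    exact mul_inv_cancel₀ h0

instance isLocalRing_ringOfInt [FiniteDimensional ℚ_[p] L] : IsLocalRing (ringOfInt p L) := by
  let := spectralNorm.normedField ℚ_[p] L
  have hO : ∀ x, x ∈ ringOfInt p L ↔ ‖x‖ ≤ 1 := mem_ringOfInt_iff_spectralNorm_le_one p L
  have hU : ∀ x : ringOfInt p L, x ∈ nonunits _ ↔ ‖(x : L)‖ < 1 := fun x => by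
    rw [mem_nonunits_iff, isUnit_ringOfInt_iff]
    exact ⟨fun h => lt_of_le_of_ne ((hO _).1 x.2) h, fun h => ne_of_lt h⟩
  refine IsLocalRing.of_nonunits_add fun a b ha hb => ?_
  rw [hU] at ha hb ⊢
  exact lt_of_le_of_lt (isNonarchimedean_spectralNorm (K := ℚ_[p]) (a : L) (b : L)) (max_lt ha hb)

theorem maxIdeal_eq_maximalIdeal [FiniteDimensional ℚ_[p] L] :
    maxIdeal p L = maximalIdeal (ringOfInt p L) :=
  jacobson_eq_maximalIdeal ⊥ bot_ne_top

theorem natCast_mem_maximalIdeal_ringOfInt [FiniteDimensional ℚ_[p] L] :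
    (p : ringOfInt p L) ∈ maximalIdeal (ringOfInt p L) := by
  rw [mem_maximalIdeal, mem_nonunits_iff, isUnit_ringOfInt_iff]
  have h := spectralNorm_extends (K := ℚ_[p]) (L := L) (p : ℚ_[p])
  rw [map_natCast] at h
  rw [Subring.coe_natCast, h, Padic.norm_p]
  have := (Fact.out : p.Prime).one_lt
  exact (inv_lt_one_of_one_lt₀ (by exact_mod_cast this)).ne

instance isDedekindDomain_ringOfInt [FiniteDimensional ℚ_[p] L] :
    IsDedekindDomain (ringOfInt p L) := by
  let := padicIntAlgebra p L
  have : IsScalarTower ℤ_[p] ℚ_[p] L := IsScalarTower.of_algebraMap_eq fun _ => rfl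
  exact integralClosure.isDedekindDomain ℤ_[p] ℚ_[p] L

theorem exists_card_residueField_ringOfInt [FiniteDimensional ℚ_[p] L] :
    ∃ f : ℕ, Nat.card (ResidueField (ringOfInt p L)) = p ^ f ∧
      eAbs p L * f = Module.finrank ℚ_[p] L := by
  let := padicIntAlgebra p L
  have : IsScalarTower ℤ_[p] ℚ_[p] L := IsScalarTower.of_algebraMap_eq fun _ => rfl
  let : Algebra ℤ_[p] (ringOfInt p L) := (integralClosure ℤ_[p] L).algebra
  have : IsIntegralClosure (ringOfInt p L) ℤ_[p] L := integralClosure.isIntegralClosure ℤ_[p] L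
  have : IsScalarTower ℤ_[p] (ringOfInt p L) L := IsScalarTower.of_algebraMap_eq fun _ => rfl
  have : Module.IsTorsionFree ℤ_[p] L := Module.IsTorsionFree.trans_faithfulSMul ℤ_[p] ℚ_[p] L
  have : Module.IsTorsionFree ℤ_[p] (ringOfInt p L) :=
    IsIntegralClosure.isTorsionFree ℤ_[p] L
  have : Module.Finite ℤ_[p] (ringOfInt p L) :=
    IsIntegralClosure.finite ℤ_[p] ℚ_[p] L (ringOfInt p L)
  rw [← IsIntegralClosure.rank ℤ_[p] ℚ_[p] L (ringOfInt p L)]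
  unfold eAbs
  rw [maxIdeal_eq_maximalIdeal]
  exact exists_card_residueField_and_ramification_mul_eq p (ringOfInt p L)

instance henselianLocalRing_ringOfInt [FiniteDimensional ℚ_[p] L] :
    HenselianLocalRing (ringOfInt p L) := by
  let := spectralNorm.normedField ℚ_[p] L
  have : CompleteSpace L := spectralNorm.completeSpace ℚ_[p] L
  have hO : ∀ x, x ∈ ringOfInt p L ↔ ‖x‖ ≤ 1 := mem_ringOfInt_iff_spectralNorm_le_one p L
  have : CharZero L := charZero_of_injective_algebraMap (algebraMap ℚ_[p] L).injective
  have hp0 : (p : ringOfInt p L) ≠ 0 := by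
    intro h
    have := congrArg (Subring.subtype _) h
    simp [(Fact.out : p.Prime).ne_zero] at this
  have hfield : ¬ IsField (ringOfInt p L) := fun h => by
    have := natCast_mem_maximalIdeal_ringOfInt p L
    rw [isField_iff_maximalIdeal_eq.1 h] at this
    exact hp0 this
  have : IsDiscreteValuationRing (ringOfInt p L) :=
    (((IsDiscreteValuationRing.TFAE (ringOfInt p L) hfield).out 0 2 :) :
      IsDiscreteValuationRing _ ↔ IsDedekindDomain _).2 inferInstance
  obtain ⟨ϖ, hϖ⟩ := IsDiscreteValuationRing.exists_irreducible (ringOfInt p L)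
  have h1 : ‖(ϖ : L)‖ < 1 :=
    lt_of_le_of_ne ((hO _).1 ϖ.2) fun h => hϖ.not_isUnit ((isUnit_ringOfInt_iff p L ϖ).2 h)
  have := isAdicComplete_span_singleton_of_norm_lt_one (ringOfInt p L) hO ϖ hϖ.ne_zero h1
  have hens : HenselianRing (ringOfInt p L) (maximalIdeal (ringOfInt p L)) := by
    rw [hϖ.maximalIdeal_eq]
    infer_instance
  exact ⟨fun f hf a₀ h h' => hens.is_henselian f hf a₀ h (h'.map _)⟩

end PadicField

section PadicFieldConsequences

variable (p : ℕ) [Fact p.Prime] (L : Type*) [Field L] [Algebra ℚ_[p] L]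
  [FiniteDimensional ℚ_[p] L]

theorem natCast_residueField_ringOfInt_eq_zero : (p : ResidueField (ringOfInt p L)) = 0 := by
  rw [← map_natCast (residue (ringOfInt p L)), residue_eq_zero_iff]
  exact natCast_mem_maximalIdeal_ringOfInt p L

/-- The residue degree `f` is the largest `g` such that `L` contains the roots of unity of
order `p ^ g - 1`. -/
theorem exists_residueDegree :
    ∃ f : ℕ, 0 < f ∧ eAbs p L * f = Module.finrank ℚ_[p] L ∧
      (∃ ξ : L, IsPrimitiveRoot ξ (p ^ f - 1)) ∧
      ∀ (g : ℕ) (ξ : L), IsPrimitiveRoot ξ (p ^ g - 1) → g ≤ f := by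
  obtain ⟨f, hf, hef⟩ := exists_card_residueField_ringOfInt p L
  have hp := (Fact.out : p.Prime)
  have hpos : 0 < Module.finrank ℚ_[p] L := Module.finrank_pos
  have hf0 : 0 < f := Nat.pos_of_ne_zero fun h => by simp [← hef, h] at hpos
  have : Finite (ResidueField (ringOfInt p L)) :=
    Nat.finite_of_card_ne_zero (by rw [hf]; exact pow_ne_zero _ hp.ne_zero)
  refine ⟨f, hf0, hef, ?_, ?_⟩
  · obtain ⟨ξ, hξ⟩ := exists_isPrimitiveRoot_card_residueField_sub_one (ringOfInt p L)
    rw [hf] at hξ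
    exact ⟨ξ, hξ.map_of_injective (f := (ringOfInt p L).subtype) Subtype.val_injective⟩
  · intro g ξ hξ
    obtain rfl | hg := eq_or_ne g 0
    · exact hf0.le
    have hn0 : 0 < p ^ g - 1 := Nat.sub_pos_of_lt (Nat.one_lt_pow hg hp.one_lt)
    have hint : ξ ∈ ringOfInt p L := by
      let := padicIntAlgebra p L
      exact (hξ.isIntegral hn0).tower_top (A := ℤ_[p])
    have hξ' : IsPrimitiveRoot (⟨ξ, hint⟩ : ringOfInt p L) (p ^ g - 1) :=
      IsPrimitiveRoot.of_map_of_injective (f := (ringOfInt p L).subtype) hξ Subtype.val_injective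
    have hdvd := hξ'.dvd_card_residueField_sub_one (by
      rw [Nat.cast_sub (Nat.one_le_pow _ _ hp.pos), Nat.cast_pow,
        natCast_residueField_ringOfInt_eq_zero, zero_pow hg]
      simp)
    rw [hf] at hdvd
    have hle := Nat.le_of_dvd (Nat.sub_pos_of_lt (Nat.one_lt_pow hf0.ne' hp.one_lt)) hdvd
    refine (Nat.pow_le_pow_iff_right hp.one_lt).1 ?_
    have := Nat.one_le_pow f p hp.pos
    lia

variable {L}

theorem le_eAbs {n : ℕ} (h : (p : ringOfInt p L) ∈ maxIdeal p L ^ n) : n ≤ eAbs p L := by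
  obtain ⟨f, -, hf, -⟩ := exists_residueDegree p L
  have hpos : 0 < Module.finrank ℚ_[p] L := Module.finrank_pos
  refine le_csSup ?_ ((Ideal.span_singleton_le_iff_mem _).2 h)
  by_contra hb
  have : eAbs p L = 0 := Nat.sSup_of_not_bddAbove hb
  rw [this] at hf
  lia

theorem eAbs_eq_one (hunram : maxIdeal p L = Ideal.span {(p : ringOfInt p L)}) :
    eAbs p L = 1 := by
  refine le_antisymm ?_ (le_eAbs p ?_)
  · refine csSup_le ⟨0, by simp⟩ fun n hn => ?_
    by_contra! h2
    have : CharZero L := charZero_of_injective_algebraMap (algebraMap ℚ_[p] L).injective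
    have hp0 : (p : ringOfInt p L) ≠ 0 := by
      intro h
      have := congrArg (Subring.subtype _) h
      simp [(Fact.out : p.Prime).ne_zero] at this
    have hu : ¬ IsUnit (p : ringOfInt p L) := natCast_mem_maximalIdeal_ringOfInt p L
    rw [Set.mem_ofPred_eq, hunram, Ideal.span_singleton_pow,
      Ideal.span_singleton_le_span_singleton] at hn
    exact h2.not_ge ((pow_dvd_pow_iff hp0 hu).1 (by simpa using hn))
  · rw [pow_one, hunram]
    exact Ideal.mem_span_singleton_self _

theorem totient_le_eAbs {m : ℕ} (hm : m ≠ 0) {ζ : L} (hζ : IsPrimitiveRoot ζ (p ^ m)) :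
    (p ^ m).totient ≤ eAbs p L := by
  have hp := (Fact.out : p.Prime)
  have hpos : 0 < p ^ m := pow_pos hp.pos m
  have hint : ζ ∈ ringOfInt p L := by
    let := padicIntAlgebra p L
    exact (hζ.isIntegral hpos).tower_top (A := ℤ_[p])
  have hζ' : IsPrimitiveRoot (⟨ζ, hint⟩ : ringOfInt p L) (p ^ m) :=
    IsPrimitiveRoot.of_map_of_injective (f := (ringOfInt p L).subtype) hζ Subtype.val_injective
  have hmem : ∀ μ ∈ primitiveRoots (p ^ m) (ringOfInt p L), 1 - μ ∈ maxIdeal p L := by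
    intro μ hμ
    have hμ := (mem_primitiveRoots hpos).1 hμ
    have : CharP (ResidueField (ringOfInt p L)) p :=
      (CharP.charP_iff_prime_eq_zero hp).2 (natCast_residueField_ringOfInt_eq_zero p L)
    rw [maxIdeal_eq_maximalIdeal, ← residue_eq_zero_iff, map_sub, map_one]
    refine eq_zero_of_pow_eq_zero (n := p ^ m) ?_
    rw [sub_pow_char_pow, ← map_pow, hμ.pow_eq_one, map_one, one_pow, sub_self]
  have hprod : (p : ringOfInt p L) =
      ∏ μ ∈ primitiveRoots (p ^ m) (ringOfInt p L), (1 - μ) := by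
    have h := cyclotomic_eq_prod_X_sub_primitiveRoots hζ'
    obtain ⟨k, rfl⟩ := Nat.exists_eq_succ_of_ne_zero hm
    have := congrArg (eval 1) h
    rw [eval_one_cyclotomic_prime_pow] at this
    simpa [eval_prod] using this
  refine le_eAbs p ?_
  rw [hprod, ← hζ'.card_primitiveRoots, ← Finset.prod_const]
  exact Ideal.prod_mem_prod hmem

end PadicFieldConsequences

open IntermediateField in
theorem finrank_adjoin_primitiveRoot (p : ℕ) [Fact p.Prime] {F C : Type*} [Field F] [Field C]
    [Algebra ℚ_[p] F] [FiniteDimensional ℚ_[p] F]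
    (hunram : maxIdeal p F = Ideal.span {(p : ringOfInt p F)}) [Algebra F C]
    {m : ℕ} (hm : m ≠ 0) {ζ : C} (hζ : IsPrimitiveRoot ζ (p ^ m)) :
    Module.finrank F F⟮ζ⟯ = (p ^ m).totient ∧
      ∀ (g : ℕ) (ξ : F⟮ζ⟯), IsPrimitiveRoot ξ (p ^ g - 1) → g ≤ Module.finrank ℚ_[p] F := by
  have hp := (Fact.out : p.Prime)
  have hpos : 0 < p ^ m := pow_pos hp.pos m
  have hint : IsIntegral F ζ := (hζ.isIntegral hpos).tower_top
  have : FiniteDimensional F F⟮ζ⟯ := adjoin.finiteDimensional hint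
  let : Algebra ℚ_[p] F⟮ζ⟯ := ((algebraMap F F⟮ζ⟯).comp (algebraMap ℚ_[p] F)).toAlgebra
  have : IsScalarTower ℚ_[p] F F⟮ζ⟯ := IsScalarTower.of_algebraMap_eq fun _ => rfl
  have : FiniteDimensional ℚ_[p] F⟮ζ⟯ := FiniteDimensional.trans ℚ_[p] F F⟮ζ⟯
  obtain ⟨f, hfpos, hf, ⟨ξ, hξ⟩, -⟩ := exists_residueDegree p F
  obtain ⟨g, -, hg, -, hmax⟩ := exists_residueDegree p F⟮ζ⟯
  rw [eAbs_eq_one p hunram, one_mul] at hf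
  have hfg : f ≤ g := hmax f _
    (hξ.map_of_injective (f := algebraMap F F⟮ζ⟯) (algebraMap F F⟮ζ⟯).injective)
  have he : (p ^ m).totient ≤ eAbs p F⟮ζ⟯ :=
    totient_le_eAbs p hm (ζ := AdjoinSimple.gen F ζ) (hζ.of_map_of_injective
      (f := algebraMap F⟮ζ⟯ C) (algebraMap F⟮ζ⟯ C).injective)
  have hcyc : cyclotomic (p ^ m) F ≠ 0 := cyclotomic_ne_zero _ _
  have hle : Module.finrank F F⟮ζ⟯ ≤ (p ^ m).totient := by
    rw [adjoin.finrank hint, ← natDegree_cyclotomic (p ^ m) F]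
    refine natDegree_le_of_dvd (minpoly.dvd F ζ ?_) hcyc
    rw [aeval_def, ← eval_map, map_cyclotomic]
    exact hζ.isRoot_cyclotomic hpos
  have htower := Module.finrank_mul_finrank ℚ_[p] F F⟮ζ⟯
  rw [← hf, ← hg] at htower
  have htpos : 0 < (p ^ m).totient := Nat.totient_pos.2 hpos
  have h1 : f * Module.finrank F F⟮ζ⟯ ≤ f * (p ^ m).totient := Nat.mul_le_mul_left _ hle
  have h2 : (p ^ m).totient * g ≤ eAbs p F⟮ζ⟯ * g := Nat.mul_le_mul_right _ he
  have hgf : g = f := le_antisymm (Nat.le_of_mul_le_mul_left (by lia) htpos) hfg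
  refine ⟨le_antisymm hle (Nat.le_of_mul_le_mul_left ?_ hfpos), ?_⟩
  · rw [hgf] at h2 htower
    lia
  · rw [← hf, ← hgf]
    exact hmax

section Radical

variable {F C : Type*} [Field F] [Field C] [Algebra F C]

open IntermediateField

theorem AlgEquiv.apply_eq_self_of_mem_adjoin (ρ : C ≃ₐ[F] C) {S : Set C} (h : ∀ x ∈ S, ρ x = x)
    {y : C} (hy : y ∈ adjoin F S) : ρ y = y := by
  induction hy using adjoin_induction with
  | mem x hx => exact h x hx
  | algebraMap x => simp
  | add x y _ _ hx hy => rw [map_add, hx, hy]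
  | inv x _ hx => rw [map_inv₀, hx]
  | mul x y _ _ hx hy => rw [map_mul, hx, hy]

/-- If inversion of `q`-th roots of unity extends to an automorphism, every root of unity in
a field generated by `q`-th roots (`q` odd) is already cyclotomic. -/
theorem IsPrimitiveRoot.mem_adjoin_of_mem_adjoin_radicals [IsGalois F C] {q : ℕ} (hq : Odd q)
    {ζ : C} (hζ : IsPrimitiveRoot ζ q) {σ : C ≃ₐ[F] C} (hσ : σ ζ = ζ⁻¹) {S : Set C}
    (hS : ∀ x ∈ S, ∃ a : F, x ^ q = algebraMap F C a) {N : ℕ} (hN : N ≠ 0) {ξ : C}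
    (hξ : IsPrimitiveRoot ξ N) (hmem : ξ ∈ adjoin F S) : ξ ∈ F⟮ζ⟯ := by
  have hq0 : q ≠ 0 := hq.pos.ne'
  have : NeZero q := ⟨hq0⟩
  have : NeZero N := ⟨hN⟩
  rw [← InfiniteGalois.fixedField_fixingSubgroup F⟮ζ⟯, mem_fixedField_iff]
  intro τ hτ
  have hτζ : τ ζ = ζ := (mem_fixingSubgroup_iff _ _).1 hτ ζ (mem_adjoin_simple_self F ζ)
  have hσ' : σ.symm ζ = ζ⁻¹ := by
    rw [AlgEquiv.symm_apply_eq, map_inv₀, hσ, inv_inv]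
  have hζ0 : ζ ≠ 0 := hζ.ne_zero hq0
  have hk : ∀ (ρ : C ≃ₐ[F] C), ∀ x ∈ S, ∃ k : ℕ, ρ x = ζ ^ k * x := by
    intro ρ x hx
    obtain rfl | hx0 := eq_or_ne x 0
    · exact ⟨0, by simp⟩
    obtain ⟨a, ha⟩ := hS x hx
    have h1 : (ρ x / x) ^ q = 1 := by
      rw [div_pow, ← map_pow, ha, AlgEquiv.commutes, ← ha, div_self (pow_ne_zero _ hx0)]
    obtain ⟨k, -, hk⟩ := hζ.eq_pow_of_pow_eq_one h1
    exact ⟨k, by rw [hk, div_mul_cancel₀ _ hx0]⟩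
  have hpow : ∀ ρ : C ≃ₐ[F] C, ∃ k : ℕ, ρ ξ = ξ ^ k := by
    intro ρ
    obtain ⟨k, -, hk⟩ := hξ.eq_pow_of_pow_eq_one (ξ := ρ ξ)
      (by rw [← map_pow, hξ.pow_eq_one, map_one])
    exact ⟨k, hk.symm⟩
  have hconj : σ (τ (σ.symm (τ ξ))) = ξ := by
    refine AlgEquiv.apply_eq_self_of_mem_adjoin (((τ.trans σ.symm).trans τ).trans σ)
      (fun x hx => ?_) hmem
    obtain ⟨k, hk1⟩ := hk τ x hx
    obtain ⟨l, hl⟩ := hk σ.symm x hx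
    have : τ (σ.symm (τ x)) = σ.symm x := by
      rw [hk1, map_mul, map_pow, hσ', hl, map_mul, map_mul, map_pow, map_pow, map_inv₀, hτζ, hk1,
        inv_pow, mul_left_comm (ζ ^ l), inv_mul_cancel_left₀ (pow_ne_zero k hζ0)]
    change σ (τ (σ.symm (τ x))) = x
    rw [this, AlgEquiv.apply_symm_apply]
  obtain ⟨a, ha⟩ := hpow σ.symm
  obtain ⟨b, hb⟩ := hpow τ
  have hsq : τ (τ ξ) = ξ := by
    have : τ (σ.symm (τ ξ)) = σ.symm (τ (τ ξ)) := by
      simp only [hb, map_pow, ha]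
      ring
    rwa [this, AlgEquiv.apply_symm_apply] at hconj
  have hτq : (τ ^ q) ξ = ξ := by
    refine AlgEquiv.apply_eq_self_of_mem_adjoin _ (fun x hx => ?_) hmem
    obtain ⟨k, hk1⟩ := hk τ x hx
    have h : ∀ j : ℕ, (τ ^ j) x = (ζ ^ k) ^ j * x := by
      intro j
      induction j with
      | zero => simp
      | succ j ih =>
        rw [pow_succ', AlgEquiv.mul_apply, ih, map_mul, map_pow, map_pow, hτζ, hk1, pow_succ,
          mul_assoc]
    rw [h, ← pow_mul, mul_comm k q, pow_mul, hζ.pow_eq_one, one_pow, one_mul]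
  obtain ⟨j, rfl⟩ := hq
  have heven : ∀ i : ℕ, (τ ^ (2 * i)) ξ = ξ := by
    intro i
    induction i with
    | zero => simp
    | succ i ih =>
      rw [show 2 * (i + 1) = 2 * i + 1 + 1 from rfl, pow_succ, pow_succ, AlgEquiv.mul_apply,
        AlgEquiv.mul_apply, hsq, ih]
  rw [pow_succ', AlgEquiv.mul_apply, heven] at hτq
  exact hτq

theorem IsPrimitiveRoot.exists_algEquiv_apply_eq_inv [IsGalois F C] {n : ℕ} (hn : n ≠ 0) {ζ : C}
    (hζ : IsPrimitiveRoot ζ n) (hdeg : Module.finrank F F⟮ζ⟯ = n.totient) :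
    ∃ σ : C ≃ₐ[F] C, σ ζ = ζ⁻¹ := by
  have hpos := Nat.pos_of_ne_zero hn
  have hint : IsIntegral F ζ := (hζ.isIntegral hpos).tower_top
  have hroot : ∀ {μ : C}, IsPrimitiveRoot μ n → aeval μ (cyclotomic n F) = 0 := fun {μ} hμ => by
    rw [aeval_def, ← eval_map, map_cyclotomic]
    exact hμ.isRoot_cyclotomic hpos
  have hmin : minpoly F ζ = cyclotomic n F := by
    refine (eq_of_monic_of_dvd_of_natDegree_le (minpoly.monic hint) (cyclotomic.monic n F)
      (minpoly.dvd F ζ (hroot hζ)) ?_).symm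
    rw [natDegree_cyclotomic, ← hdeg, adjoin.finrank hint]
  exact minpoly.exists_algEquiv_of_root' hint.isAlgebraic (by rw [hmin]; exact hroot hζ.inv)

end Radical

open IntermediateField in
/-- Adjoining `p`-power radicals (roots of unity included) to an unramified `p`-adic field gives
a totally ramified extension. -/
theorem eAbs_adjoin_radicals (p : ℕ) [Fact p.Prime] (hp : p ≠ 2) (F Ω : Type*) [Field F] [Field Ω]
    [Algebra ℚ_[p] F] [FiniteDimensional ℚ_[p] F]
    (hunram : maxIdeal p F = Ideal.span {(p : ringOfInt p F)})
    [Algebra F Ω] [Algebra ℚ_[p] Ω] [IsScalarTower ℚ_[p] F Ω] {m : ℕ} (hm : m ≠ 0)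
    {S : Set Ω} (hfin : S.Finite) (hS : ∀ x ∈ S, ∃ a : F, x ^ p ^ m = algebraMap F Ω a) :
    eAbs p (adjoin F S) = Module.finrank F (adjoin F S) := by
  have hpp := (Fact.out : p.Prime)
  have hq0 : p ^ m ≠ 0 := pow_ne_zero m hpp.ne_zero
  have hintS : ∀ x ∈ S, IsIntegral F x := fun x hx => by
    obtain ⟨a, ha⟩ := hS x hx
    exact IsIntegral.of_pow (Nat.pos_of_ne_zero hq0) (ha ▸ isIntegral_algebraMap)
  have : Finite S := hfin
  have hfd : FiniteDimensional F (adjoin F S) := finiteDimensional_adjoin hintS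
  set M := adjoin F S with hM
  have : FiniteDimensional ℚ_[p] M := FiniteDimensional.trans ℚ_[p] F M
  have : CharZero F := charZero_of_injective_algebraMap (algebraMap ℚ_[p] F).injective
  let C := AlgebraicClosure M
  have : Algebra.IsAlgebraic F C := Algebra.IsAlgebraic.trans F M C
  have : IsAlgClosure F C := ⟨inferInstance, inferInstance⟩
  have : Normal F C := IsAlgClosure.normal F C
  have : IsGalois F C := ⟨⟩
  have : CharZero C := charZero_of_injective_algebraMap (algebraMap F C).injective
  have : NeZero ((p ^ m : ℕ) : C) := ⟨by exact_mod_cast hq0⟩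
  obtain ⟨ζ, hζ⟩ := HasEnoughRootsOfUnity.exists_primitiveRoot C (p ^ m)
  obtain ⟨hdeg, hmax⟩ := finrank_adjoin_primitiveRoot p hunram hm hζ
  obtain ⟨σ, hσ⟩ := hζ.exists_algEquiv_apply_eq_inv hq0 hdeg
  obtain ⟨f, hf0, hf, ⟨ξ, hξ⟩, -⟩ := exists_residueDegree p F
  obtain ⟨g, hg0, hg, ⟨η, hη⟩, hgmax⟩ := exists_residueDegree p M
  rw [eAbs_eq_one p hunram, one_mul] at hf
  have hfg : f ≤ g :=
    hgmax f _ (hξ.map_of_injective (f := algebraMap F M) (algebraMap F M).injective)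
  have hT : ∀ y : M, algebraMap M C y ∈ adjoin F (algebraMap M C '' {x : M | (x : Ω) ∈ S}) := by
    rintro ⟨y, hy⟩
    induction hy using adjoin_induction with
    | mem x hx => exact subset_adjoin _ _ ⟨_, hx, rfl⟩
    | algebraMap x => exact IntermediateField.algebraMap_mem _ x
    | add x y hx hy ihx ihy =>
      have := add_mem ihx ihy
      rwa [← map_add] at this
    | inv x hx ih =>
      have := inv_mem ih
      rwa [← map_inv₀] at this
    | mul x y hx hy ihx ihy =>
      have := mul_mem ihx ihy
      rwa [← map_mul] at this
  have hηC := hη.map_of_injective (f := algebraMap M C) (algebraMap M C).injective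
  have hmem : algebraMap M C η ∈ F⟮ζ⟯ := by
    refine hζ.mem_adjoin_of_mem_adjoin_radicals ((hpp.odd_of_ne_two hp).pow) hσ ?_
      (Nat.sub_pos_of_lt (Nat.one_lt_pow hg0.ne' hpp.one_lt)).ne' hηC (hT η)
    rintro _ ⟨x, hx, rfl⟩
    obtain ⟨a, ha⟩ := hS x hx
    refine ⟨a, ?_⟩
    rw [← map_pow, IsScalarTower.algebraMap_apply F M C]
    exact congrArg _ (Subtype.ext ha)
  have hgf : g ≤ f := hf ▸ hmax g ⟨_, hmem⟩
    (IsPrimitiveRoot.of_map_of_injective (f := algebraMap F⟮ζ⟯ C) hηC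
      (algebraMap F⟮ζ⟯ C).injective)
  have htower := Module.finrank_mul_finrank ℚ_[p] F M
  rw [← hf, ← hg, le_antisymm hgf hfg, mul_comm] at htower
  exact (Nat.eq_of_mul_eq_mul_right hf0 htower).symm

end Auxiliary

/-- Let `p` be an odd prime, `F/ℚ_p` a finite unramified extension, and
`a₁, ..., a_n ∈ 𝒪_F \ 𝒪_F^p` whose classes in `F*/(F*)^p` are independent.  Then for all
`r ≥ 1` and `s₁, ..., s_n ≥ 0`, the extension
`F(ζ_{p^r}, a₁^{1/p^{s₁}}, ..., a_n^{1/p^{s_n}})/F` is totally ramified. -/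
theorem radical_extension_totally_ramified (p : ℕ) [Fact p.Prime] (hp : p ≠ 2)
    (F Ω : Type*) [Field F] [Field Ω]
    [Algebra ℚ_[p] F] [FiniteDimensional ℚ_[p] F]
    (hunram : maxIdeal p F = Ideal.span {(p : ringOfInt p F)})
    [Algebra F Ω] [Algebra ℚ_[p] Ω] [IsScalarTower ℚ_[p] F Ω]
    (n : ℕ) (a : Fin n → F)
    (haO : ∀ i, a i ∈ ringOfInt p F)
    (haP : ∀ i, ¬∃ b ∈ ringOfInt p F, b ^ p = a i)
    (hind : ∀ i : Fin n, 0 < (i : ℕ) →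
      ¬∃ (c : F) (x : Fin n → ℤ),
        a i = c ^ p * ∏ j ∈ Finset.univ.filter (fun j => j < i), a j ^ x j) :
    ∀ (r : ℕ), 1 ≤ r → ∀ (s : Fin n → ℕ) (ζ : Ω), IsPrimitiveRoot ζ (p ^ r) →
      ∀ α : Fin n → Ω, (∀ i, α i ^ (p ^ s i) = algebraMap F Ω (a i)) →
        eAbs p ↥(IntermediateField.adjoin F ({ζ} ∪ Set.range α)) =
          Module.finrank F ↥(IntermediateField.adjoin F ({ζ} ∪ Set.range α)) * eAbs p F := by
  intro r hr s ζ hζ α hα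
  rw [eAbs_eq_one p hunram, mul_one]
  have hle : ∀ i, s i ≤ r + ∑ j, s j := fun i =>
    (Finset.single_le_sum (fun j _ => Nat.zero_le (s j)) (Finset.mem_univ i)).trans
      (Nat.le_add_left _ _)
  refine eAbs_adjoin_radicals p hp F Ω hunram (m := r + ∑ j, s j) (by lia)
    ((Set.finite_singleton ζ).union (Set.finite_range α)) ?_
  rintro x (rfl | ⟨i, rfl⟩)
  · exact ⟨1, by rw [pow_add, pow_mul, hζ.pow_eq_one, one_pow, map_one]⟩
  · refine ⟨a i ^ p ^ (r + ∑ j, s j - s i), ?_⟩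
    rw [map_pow, ← hα, ← pow_mul, ← pow_add, Nat.add_sub_cancel' (hle i)]
end

section
/- Let p be an odd prime, F/ℚ_p a finite unramified extension, a ∈ 𝒪_F \ 𝒪_F^p with p ∤ v_F(a), and s ≥ 0 an integer. Let L_{1,s} = F(ζ_p, a^{1/p^s}), assumed totally ramified over F of degree p^s(p−1). Then the unique ramification jump of L_{1,s+1}/L_{1,s} equals p^{s+1}. -/
open WithZero

section IntegerRing

variable {p : ℕ} [Fact p.Prime] {M : Type*} [Field M] [Algebra ℚ_[p] M]

lemma mem_ringOfInt_iff (x : M) :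
    x ∈ ringOfInt p M ↔ ((algebraMap ℚ_[p] M).comp (algebraMap ℤ_[p] ℚ_[p])).IsIntegralElem x :=
  Iff.rfl

lemma map_mem_ringOfInt {K : Type*} [Field K] [Algebra ℚ_[p] K] (f : K →ₐ[ℚ_[p]] M) {x : K}
    (hx : x ∈ ringOfInt p K) : f x ∈ ringOfInt p M := by
  rw [mem_ringOfInt_iff] at hx ⊢
  have h := hx.map f.toRingHom
  rwa [← RingHom.comp_assoc, show f.toRingHom.comp (algebraMap ℚ_[p] K) = algebraMap ℚ_[p] M from
    f.comp_algebraMap] at h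

lemma algebraMap_mem_ringOfInt_iff (x : ℚ_[p]) :
    algebraMap ℚ_[p] M x ∈ ringOfInt p M ↔ ‖x‖ ≤ 1 := by
  let := padicIntAlgebra p M
  have : IsScalarTower ℤ_[p] ℚ_[p] M := .of_algebraMap_eq fun _ ↦ rfl
  change IsIntegral ℤ_[p] (algebraMap ℚ_[p] M x) ↔ _
  rw [isIntegral_algebraMap_iff (algebraMap ℚ_[p] M).injective, IsIntegrallyClosed.isIntegral_iff]
  exact ⟨fun ⟨y, hy⟩ ↦ hy ▸ y.2, fun h ↦ ⟨⟨x, h⟩, rfl⟩⟩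

lemma mem_ringOfInt_of_spectralNorm_le_one [FiniteDimensional ℚ_[p] M] {x : M}
    (hx : spectralNorm ℚ_[p] M x ≤ 1) : x ∈ ringOfInt p M := by
  let := padicIntAlgebra p M
  have : IsScalarTower ℤ_[p] ℚ_[p] M := .of_algebraMap_eq fun _ ↦ rfl
  change IsIntegral ℤ_[p] x
  have hint : IsIntegral ℚ_[p] x := .of_finite ℚ_[p] x
  have hmon := minpoly.monic hint
  have hc := (spectralValue_le_one_iff hmon).1 hx
  obtain ⟨q, hq, -, hqm⟩ := Polynomial.lifts_and_natDegree_eq_and_monic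
    (f := algebraMap ℤ_[p] ℚ_[p]) (p := minpoly ℚ_[p] x)
    ((Polynomial.lifts_iff_coeff_lifts _).2 fun n ↦ ⟨⟨_, hc n⟩, rfl⟩) hmon
  refine ⟨q, hqm, ?_⟩
  have := minpoly.aeval ℚ_[p] x
  rw [← hq, Polynomial.aeval_map_algebraMap] at this
  exact this

lemma mem_or_inv_mem_ringOfInt [FiniteDimensional ℚ_[p] M] (x : M) :
    x ∈ ringOfInt p M ∨ x⁻¹ ∈ ringOfInt p M := by
  rcases le_total (spectralMulAlgNorm ℚ_[p] M x) 1 with h | h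
  · exact .inl (mem_ringOfInt_of_spectralNorm_le_one h)
  · refine .inr (mem_ringOfInt_of_spectralNorm_le_one ?_)
    change spectralMulAlgNorm ℚ_[p] M x⁻¹ ≤ 1
    rw [map_inv₀]
    exact inv_le_one_of_one_le₀ h

/-- `w` is the normalized discrete valuation of the `p`-adic field `M`. -/
def IsNormalizedVal (p : ℕ) [Fact p.Prime] {M : Type*} [Field M] [Algebra ℚ_[p] M]
    (w : Valuation M ℤᵐ⁰) : Prop :=
  (∀ (n : ℕ) (x : M), (∃ y ∈ maxIdeal p M ^ n, (y : M) = x) ↔ w x ≤ exp (-(n : ℤ))) ∧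
    ∃ π, w π = exp (-1)

variable (p M) in
lemma exists_isNormalizedVal [FiniteDimensional ℚ_[p] M] :
    ∃ w : Valuation M ℤᵐ⁰, IsNormalizedVal p w := by
  let := padicIntAlgebra p M
  have : IsScalarTower ℤ_[p] ℚ_[p] M := .of_algebraMap_eq fun _ ↦ rfl
  have : IsDedekindDomain (ringOfInt p M) := integralClosure.isDedekindDomain ℤ_[p] ℚ_[p] M
  have : IsFractionRing (ringOfInt p M) M :=
    integralClosure.isFractionRing_of_finite_extension ℚ_[p] M
  have : ValuationRing (ringOfInt p M) :=
    (ValuationRing.iff_isInteger_or_isInteger (ringOfInt p M) M).2 fun x ↦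
      (mem_or_inv_mem_ringOfInt (p := p) x).imp (fun h ↦ ⟨⟨x, h⟩, rfl⟩) (fun h ↦ ⟨⟨_, h⟩, rfl⟩)
  have hfield : ¬ IsField (ringOfInt p M) := by
    intro h
    have hp0 : (p : ℚ_[p]) ≠ 0 := by exact_mod_cast (Fact.out : p.Prime).ne_zero
    have hp0' : (p : ringOfInt p M) ≠ 0 := fun h0 ↦ by
      have h1 : algebraMap ℚ_[p] M p = 0 := by
        rw [map_natCast, ← map_natCast (ringOfInt p M).subtype, h0, map_zero]
      exact hp0 ((map_eq_zero _).1 h1)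
    obtain ⟨y, hy⟩ := h.mul_inv_cancel hp0'
    have hy' : (y : M) = algebraMap ℚ_[p] M (p : ℚ_[p])⁻¹ := by
      have h1 := congrArg (ringOfInt p M).subtype hy
      rw [map_mul, map_natCast, map_one] at h1
      rw [map_inv₀, map_natCast]
      exact eq_inv_of_mul_eq_one_right h1
    have := (algebraMap_mem_ringOfInt_iff _).1 (hy' ▸ y.2)
    rw [norm_inv, Padic.norm_p, inv_inv] at this
    exact absurd this (not_le.2 (by exact_mod_cast (Fact.out : p.Prime).one_lt))
  let v : IsDedekindDomain.HeightOneSpectrum (ringOfInt p M) :=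
    ⟨IsLocalRing.maximalIdeal _, inferInstance,
      fun h ↦ hfield (IsLocalRing.isField_iff_maximalIdeal_eq.2 h)⟩
  have hv : maxIdeal p M = v.asIdeal := IsLocalRing.jacobson_eq_maximalIdeal _ bot_ne_top
  have hone : ∀ x : M, v.valuation M x ≤ 1 → x ∈ ringOfInt p M := by
    intro x hx
    obtain ⟨y, rfl⟩ := IsDedekindDomain.HeightOneSpectrum.mem_integers_of_valuation_le_one
      (R := ringOfInt p M) M x fun v' ↦ by
        have : v' = v := IsDedekindDomain.HeightOneSpectrum.ext
          (IsLocalRing.eq_maximalIdeal v'.isMaximal)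
        rwa [this]
    exact y.2
  refine ⟨v.valuation M, fun n x ↦ ?_, v.valuation_exists_uniformizer M⟩
  rw [hv]
  constructor
  · rintro ⟨y, hy, rfl⟩
    have := v.valuation_of_algebraMap (K := M) y
    change v.valuation M (y : M) = _ at this
    rwa [this, v.intValuation_le_pow_iff_mem]
  · intro h
    have hx := hone x (h.trans (by rw [← exp_zero, exp_le_exp]; lia))
    refine ⟨⟨x, hx⟩, ?_, rfl⟩
    rw [← v.intValuation_le_pow_iff_mem, ← v.valuation_of_algebraMap (K := M)]
    exact h

end IntegerRing

section NormalizedVal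

variable {p : ℕ} [Fact p.Prime] {M : Type*} [Field M] [Algebra ℚ_[p] M] {w : Valuation M ℤᵐ⁰}

lemma IsNormalizedVal.mem_ringOfInt_iff (hw : IsNormalizedVal p w) (x : M) :
    x ∈ ringOfInt p M ↔ w x ≤ 1 := by
  have := hw.1 0 x
  simp only [pow_zero, Ideal.one_eq_top, Submodule.mem_top, true_and, Nat.cast_zero, neg_zero,
    exp_zero] at this
  rw [← this]
  exact ⟨fun h ↦ ⟨⟨x, h⟩, rfl⟩, fun ⟨y, hy⟩ ↦ hy ▸ y.2⟩

lemma IsNormalizedVal.log_eq_neg_valInt (hw : IsNormalizedVal p w) {x : M} (hx0 : x ≠ 0)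
    (hx : x ∈ ringOfInt p M) : log (w x) = -(valInt p M x : ℤ) := by
  have hwx : w x ≠ 0 := (Valuation.ne_zero_iff _).2 hx0
  have hle : log (w x) ≤ 0 := by
    rw [log_le_iff_le_exp hwx, exp_zero]; exact (hw.mem_ringOfInt_iff x).1 hx
  obtain ⟨m, hm⟩ := Int.eq_ofNat_of_zero_le (neg_nonneg.2 hle)
  have : {n : ℕ | ∃ y ∈ maxIdeal p M ^ n, (y : M) = x} = Set.Iic m := by
    ext n
    rw [Set.mem_ofPred_eq, hw.1, ← log_le_iff_le_exp hwx, Set.mem_Iic]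
    lia
  rw [valInt, this, csSup_Iic]
  lia

lemma eAbs_eq_valInt : eAbs p M = valInt p M (p : M) := by
  unfold eAbs valInt
  congr 1
  ext n
  have hcast : ((p : ringOfInt p M) : M) = p := map_natCast (ringOfInt p M).subtype p
  rw [Set.mem_ofPred_eq, Set.mem_ofPred_eq, Ideal.span_singleton_le_iff_mem]
  refine ⟨fun h ↦ ⟨_, h, hcast⟩, fun ⟨y, hy, hyp⟩ ↦ ?_⟩
  rwa [← Subtype.ext (hyp.trans hcast.symm)]

variable (p M) in
lemma natCast_prime_ne_zero : (p : M) ≠ 0 := by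
  rw [← map_natCast (algebraMap ℚ_[p] M), Ne, map_eq_zero]
  exact_mod_cast (Fact.out : p.Prime).ne_zero

lemma IsNormalizedVal.log_prime (hw : IsNormalizedVal p w) :
    log (w (p : M)) = -(eAbs p M : ℤ) := by
  rw [eAbs_eq_valInt]
  exact hw.log_eq_neg_valInt (natCast_prime_ne_zero p M) (natCast_mem _ p)

lemma IsNormalizedVal.log_prime_of_unramified (hw : IsNormalizedVal p w)
    (h : maxIdeal p M = Ideal.span {(p : ringOfInt p M)}) : log (w (p : M)) = -1 := by
  have hp0 := (Valuation.ne_zero_iff w).2 (natCast_prime_ne_zero p M)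
  have hcast : ((p : ringOfInt p M) : M) = p := map_natCast (ringOfInt p M).subtype p
  apply le_antisymm
  · rw [log_le_iff_le_exp hp0]
    refine (hw.1 1 _).1 ⟨_, ?_, hcast⟩
    rw [pow_one, h]
    exact Ideal.mem_span_singleton_self _
  · obtain ⟨π, hπ⟩ := hw.2
    obtain ⟨y, hy, rfl⟩ := (hw.1 1 π).2 hπ.le
    rw [pow_one, h, Ideal.mem_span_singleton] at hy
    obtain ⟨z, rfl⟩ := hy
    rw [le_log_iff_exp_le hp0, ← hπ, Subring.coe_mul, map_mul, hcast]
    exact mul_le_of_le_one_right' ((hw.mem_ringOfInt_iff _).1 z.2)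

lemma IsNormalizedVal.log_map {K : Type*} [Field K] [Algebra ℚ_[p] K] {v : Valuation K ℤᵐ⁰}
    (hv : IsNormalizedVal p v) (hw : IsNormalizedVal p w) (f : K →ₐ[ℚ_[p]] M) (x : K) :
    log (w (f x)) * log (v (p : K)) = log (v x) * log (w (p : M)) := by
  rcases eq_or_ne x 0 with rfl | hx
  · simp
  have hp0 := natCast_prime_ne_zero p K
  have hle : ∀ y : K, v y ≤ 1 → w (f y) ≤ 1 := fun y hy ↦
    (hw.mem_ringOfInt_iff _).1 (map_mem_ringOfInt f ((hv.mem_ringOfInt_iff y).2 hy))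
  have hone : ∀ y : K, v y = 1 → w (f y) = 1 := fun y hy ↦ by
    refine le_antisymm (hle y hy.le) ?_
    have h1 := hle y⁻¹ (by rw [map_inv₀, hy, inv_one])
    have h0 : w (f y) ≠ 0 := by
      rw [Valuation.ne_zero_iff, map_ne_zero, ← Valuation.ne_zero_iff v, hy]
      exact one_ne_zero
    rw [map_inv₀, map_inv₀] at h1
    exact (inv_le_one₀ (zero_lt_iff.2 h0)).1 h1
  set a := log (v (p : K))
  set b := log (v x) with hb
  have hvx := (Valuation.ne_zero_iff v).2 hx
  have hvp := (Valuation.ne_zero_iff v).2 hp0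
  have hwx := (Valuation.ne_zero_iff w).2 ((map_ne_zero f).2 hx)
  have hwp := (Valuation.ne_zero_iff w).2 (natCast_prime_ne_zero p M)
  have h1 : v (x ^ a * (p : K) ^ (-b)) = 1 := by
    rw [map_mul, map_zpow₀, map_zpow₀, ← exp_log hvx, ← exp_log hvp, ← exp_zsmul, ← exp_zsmul,
      ← exp_add, ← exp_zero, exp_inj]
    change a * b + -b * a = 0
    ring
  have h2 := congrArg log (hone _ h1)
  rw [map_mul, map_mul, map_zpow₀, map_zpow₀, map_zpow₀, map_zpow₀, map_natCast,
    log_mul (zpow_ne_zero _ hwx) (zpow_ne_zero _ hwp), log_zpow, log_zpow, log_one, smul_eq_mul,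
    smul_eq_mul] at h2
  linarith

end NormalizedVal

lemma Valuation.exists_map_sum_eq_of_injOn {M Γ ι : Type*} [Field M]
    [LinearOrderedCommGroupWithZero Γ] (w : Valuation M Γ) {s : Finset ι} (hs : s.Nonempty)
    (f : ι → M) (hf : ∀ i ∈ s, ∀ j ∈ s, f i ≠ 0 → w (f i) = w (f j) → i = j) :
    ∃ i ∈ s, w (f i) = w (∑ j ∈ s, f j) ∧ ∀ j ∈ s, w (f j) ≤ w (∑ j ∈ s, f j) := by
  classical
  obtain ⟨i, hi, hmax⟩ := s.exists_max_image (fun j ↦ w (f j)) hs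
  suffices w (∑ j ∈ s, f j) = w (f i) from ⟨i, hi, this.symm, fun j hj ↦ this ▸ hmax j hj⟩
  rcases eq_or_ne (f i) 0 with h0 | h0
  · rw [Finset.sum_eq_zero, h0]
    intro j hj
    have := hmax j hj
    rwa [h0, map_zero, le_zero_iff, map_eq_zero] at this
  · rw [← Finset.add_sum_erase _ _ hi]
    refine Valuation.map_add_eq_of_lt_left _
      (Valuation.map_sum_lt _ ((Valuation.ne_zero_iff _).2 h0) fun j hj ↦ ?_)
    obtain ⟨hji, hj⟩ := Finset.mem_erase.1 hj
    exact lt_of_le_of_ne (hmax j hj) fun h ↦ hji (hf i hi j hj h0 h.symm).symm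

lemma log_map_sub_one_of_isPrimitiveRoot {M : Type*} [Field M] (w : Valuation M ℤᵐ⁰) {p : ℕ}
    (hp : p.Prime) {ζ : M} (hζ : IsPrimitiveRoot ζ p) :
    ((p : ℤ) - 1) * log (w (ζ - 1)) = log (w (p : M)) := by
  have hle : ∀ η : M, w η = 1 → ∀ k : ℕ, w (1 - η ^ k) ≤ w (1 - η) := by
    intro η hη k
    rw [← mul_neg_geom_sum, map_mul]
    refine mul_le_of_le_one_right' (Valuation.map_sum_le _ fun i _ ↦ ?_)
    rw [map_pow, hη, one_pow]
  have hone : w ζ = 1 := by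
    have := congrArg w hζ.pow_eq_one
    rw [map_pow, map_one] at this
    exact (pow_eq_one_iff_of_nonneg zero_le hp.ne_zero).1 this
  have heq : ∀ k ∈ Finset.range (p - 1), w (1 - ζ ^ (k + 1)) = w (1 - ζ) := by
    intro k hk
    refine le_antisymm (hle ζ hone _) ?_
    have hk' : (k + 1).Coprime p := by
      have := Finset.mem_range.1 hk
      exact Nat.Coprime.symm (Nat.coprime_of_lt_prime k.succ_ne_zero (by lia) hp)
    have hη := hζ.pow_of_coprime _ hk'
    have : NeZero p := ⟨hp.ne_zero⟩
    obtain ⟨j, -, hj⟩ := hη.eq_pow_of_pow_eq_one hζ.pow_eq_one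
    conv_lhs => rw [← hj]
    exact hle _ (by rw [map_pow, hone, one_pow]) j
  obtain ⟨n, rfl⟩ := Nat.exists_eq_succ_of_ne_zero hp.ne_zero
  have h := congrArg w hζ.prod_one_sub_pow_eq_order
  rw [Nat.succ_sub_one] at heq
  rw [map_prod, Finset.prod_congr rfl heq, Finset.prod_const, Finset.card_range] at h
  have h := congrArg log h
  rw [log_pow, Valuation.map_sub_swap] at h
  push_cast at h ⊢
  rw [← h]
  simp

section Jump

variable {p : ℕ} [Fact p.Prime] {K M : Type*} [Field K] [Field M] [Algebra K M]
  {w : Valuation M ℤᵐ⁰} {α : M}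

lemma IsNormalizedVal.mem_ramSet_iff [Algebra ℚ_[p] M] (hw : IsNormalizedVal p w) {i : ℕ} {σ : M ≃ₐ[K] M} :
    σ ∈ ramSet p K M i ↔ ∀ x, w x ≤ 1 → w (σ x - x) ≤ exp (-((i + 1 : ℕ) : ℤ)) := by
  simp only [← hw.1, ← hw.mem_ringOfInt_iff]
  exact ⟨fun h x hx ↦ h ⟨x, hx⟩, fun h x ↦ h x x.2⟩

lemma exists_map_sum_mul_pow_eq (hK : ∀ c : K, (p : ℤ) ∣ log (w (algebraMap K M c)))
    (hα : ¬ (p : ℤ) ∣ log (w α)) (c : Fin p → K) :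
    ∃ i, w (c i • α ^ (i : ℕ)) = w (∑ j, c j • α ^ (j : ℕ)) ∧
      ∀ j, w (c j • α ^ (j : ℕ)) ≤ w (∑ j, c j • α ^ (j : ℕ)) := by
  have hpp : p.Prime := Fact.out
  have : NeZero p := ⟨hpp.ne_zero⟩
  simpa using w.exists_map_sum_eq_of_injOn (s := Finset.univ) Finset.univ_nonempty
    (fun j : Fin p ↦ c j • α ^ (j : ℕ)) fun i _ j _ h0 h ↦ by
      have hi := (Valuation.ne_zero_iff w).2 h0
      have hj := h ▸ hi
      have hlog := congrArg log h
      rw [Algebra.smul_def, map_mul] at hi hj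
      rw [Algebra.smul_def, Algebra.smul_def, map_mul, map_mul, log_mul (left_ne_zero_of_mul hi)
        (right_ne_zero_of_mul hi), log_mul (left_ne_zero_of_mul hj) (right_ne_zero_of_mul hj),
        map_pow, map_pow, log_pow, log_pow, nsmul_eq_mul, nsmul_eq_mul] at hlog
      have hdvd : (p : ℤ) ∣ ((i : ℕ) - (j : ℕ) : ℤ) * log (w α) := by
        have := dvd_sub (hK (c j)) (hK (c i))
        rwa [show log (w (algebraMap K M (c j))) - log (w (algebraMap K M (c i))) =
          ((i : ℕ) - (j : ℕ) : ℤ) * log (w α) by linarith] at this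
      have := Int.eq_zero_of_abs_lt_dvd
        (((Nat.prime_iff_prime_int.1 hpp).dvd_or_dvd hdvd).resolve_right hα)
        (by rw [abs_lt]; constructor <;> lia)
      exact Fin.ext (by lia)

lemma exists_eq_sum_mul_pow (hK : ∀ c : K, (p : ℤ) ∣ log (w (algebraMap K M c)))
    (hα : ¬ (p : ℤ) ∣ log (w α)) (hdeg : Module.finrank K M = p) (x : M) :
    ∃ c : Fin p → K, x = ∑ j, c j • α ^ (j : ℕ) := by
  have hpp : p.Prime := Fact.out
  have : NeZero p := ⟨hpp.ne_zero⟩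
  have hα0 : α ≠ 0 := by rintro rfl; simp at hα
  have hli : LinearIndependent K fun j : Fin p ↦ α ^ (j : ℕ) := by
    rw [Fintype.linearIndependent_iff]
    intro c hc j
    obtain ⟨-, -, h⟩ := exists_map_sum_mul_pow_eq hK hα c
    have := h j
    rw [hc, map_zero, le_zero_iff, map_eq_zero, smul_eq_zero] at this
    exact this.resolve_right (pow_ne_zero _ hα0)
  let b := basisOfLinearIndependentOfCardEqFinrank hli (by rw [Fintype.card_fin, hdeg])
  exact ⟨b.repr x, by simpa [b] using (b.sum_repr x).symm⟩

lemma adjoin_eq_top_of_not_dvd (hK : ∀ c : K, (p : ℤ) ∣ log (w (algebraMap K M c)))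
    (hα : ¬ (p : ℤ) ∣ log (w α)) (hdeg : Module.finrank K M = p) :
    IntermediateField.adjoin K {α} = ⊤ := by
  rw [eq_top_iff]
  rintro x -
  obtain ⟨c, rfl⟩ := exists_eq_sum_mul_pow hK hα hdeg x
  exact sum_mem fun j _ ↦ IntermediateField.smul_mem _
    (pow_mem (IntermediateField.mem_adjoin_simple_self K α) _)

lemma exists_map_eq_isPrimitiveRoot_mul (hdeg : IntermediateField.adjoin K {α} = ⊤)
    {b : K} (hb : α ^ p = algebraMap K M b) (hα0 : α ≠ 0) {ζ : K} (hζ : IsPrimitiveRoot ζ p)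
    {σ : M ≃ₐ[K] M} (hσ : σ ≠ 1) :
    ∃ η : K, IsPrimitiveRoot η p ∧ σ α = η • α := by
  have : NeZero p := ⟨(Fact.out : p.Prime).ne_zero⟩
  have h1 : (σ α / α) ^ p = 1 := by
    rw [div_pow, ← map_pow, hb, σ.commutes, div_self]
    rw [← hb]
    exact pow_ne_zero _ hα0
  obtain ⟨j, -, hj⟩ :=
    (hζ.map_of_injective (algebraMap K M).injective).eq_pow_of_pow_eq_one h1
  rw [eq_div_iff hα0, ← map_pow, ← Algebra.smul_def] at hj
  refine ⟨ζ ^ j, ?_, hj.symm⟩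
  have hord : orderOf (ζ ^ j) = p := by
    refine orderOf_eq_prime (by rw [pow_right_comm, hζ.pow_eq_one, one_pow]) fun h ↦ hσ ?_
    rw [h, one_smul] at hj
    have hfix : (⊤ : IntermediateField K M) ≤
        IntermediateField.fixedField (Subgroup.zpowers σ) := by
      rw [← hdeg, IntermediateField.adjoin_simple_le_iff, IntermediateField.mem_fixedField_iff]
      intro τ hτ
      exact (Subgroup.zpowers_le (H := MulAction.stabilizer (M ≃ₐ[K] M) α)).2 hj.symm hτ
    ext x
    exact (IntermediateField.mem_fixedField_iff _ _).1 (hfix (IntermediateField.mem_top (x := x))) σ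
      (Subgroup.mem_zpowers σ)
  exact hord ▸ IsPrimitiveRoot.orderOf _

lemma map_apply_sub_self_smul_pow {t : ℕ}
    (ht : ∀ η : K, IsPrimitiveRoot η p → w (algebraMap K M η - 1) = exp (-(t : ℤ)))
    {η : K} (hη : IsPrimitiveRoot η p) {σ : M ≃ₐ[K] M} (hσ : σ α = η • α) (c : K) {k : ℕ}
    (hk0 : k ≠ 0) (hk : k < p) :
    w (σ (c • α ^ k) - c • α ^ k) = exp (-(t : ℤ)) * w (c • α ^ k) := by
  have hprim := hη.pow_of_coprime k
    (Nat.Coprime.symm (Nat.coprime_of_lt_prime hk0 hk Fact.out))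
  rw [← ht _ hprim, ← map_mul, map_smul, map_pow, hσ]
  congr 1
  simp only [Algebra.smul_def, map_pow]
  ring

lemma le_exp_neg_one_of_not_dvd {p : ℕ} {x : ℤᵐ⁰} (hx : x ≤ 1) (h : x ≠ 0 → ¬ (p : ℤ) ∣ log x) :
    x ≤ exp (-1) := by
  rcases eq_or_ne x 0 with rfl | h0
  · exact zero_le
  · rw [← exp_zero, ← log_le_iff_le_exp h0] at hx
    rw [← log_le_iff_le_exp h0]
    have : log x ≠ 0 := fun h1 ↦ h h0 (h1 ▸ dvd_zero _)
    lia

lemma not_dvd_log_smul_pow (hK : ∀ c : K, (p : ℤ) ∣ log (w (algebraMap K M c)))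
    (hα : ¬ (p : ℤ) ∣ log (w α)) {c : K} {k : ℕ} (hk0 : k ≠ 0) (hk : k < p)
    (h0 : w (c • α ^ k) ≠ 0) : ¬ (p : ℤ) ∣ log (w (c • α ^ k)) := by
  rw [Algebra.smul_def, map_mul] at h0 ⊢
  rw [log_mul (left_ne_zero_of_mul h0) (right_ne_zero_of_mul h0), map_pow, log_pow, nsmul_eq_mul,
    Int.dvd_add_right (hK c)]
  intro h
  rcases (Nat.prime_iff_prime_int.1 (Fact.out : p.Prime)).dvd_or_dvd h with h | h
  · exact hk0 (Nat.eq_zero_of_dvd_of_lt (Int.natCast_dvd_natCast.1 h) hk)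
  · exact hα h

lemma hasUniqueRamJump_of_kummer [Algebra ℚ_[p] M] (hw : IsNormalizedVal p w)
    (hK : ∀ c : K, (p : ℤ) ∣ log (w (algebraMap K M c)))
    (hα : ¬ (p : ℤ) ∣ log (w α)) (hdeg : Module.finrank K M = p)
    {b : K} (hb : α ^ p = algebraMap K M b) {ζ : K} (hζ : IsPrimitiveRoot ζ p) {t : ℕ}
    (ht : ∀ η : K, IsPrimitiveRoot η p → w (algebraMap K M η - 1) = exp (-(t : ℤ))) :
    HasUniqueRamJump p K M t := by
  have hpp : p.Prime := Fact.out
  have hα0 : α ≠ 0 := by rintro rfl; simp at hα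
  have hfd : FiniteDimensional K M := .of_finrank_pos (hdeg ▸ hpp.pos)
  have htop := adjoin_eq_top_of_not_dvd hK hα hdeg
  have hroots : (primitiveRoots (Module.finrank K M) K).Nonempty :=
    ⟨ζ, by rwa [hdeg, mem_primitiveRoots hpp.pos]⟩
  have hsplit := isSplittingField_X_pow_sub_C_of_root_adjoin_eq_top hroots (by rwa [hdeg]) htop
  have hgal : IsGalois K M := isGalois_of_isSplittingField_X_pow_sub_C hroots
    (irreducible_X_pow_sub_C_of_root_adjoin_eq_top (by rwa [hdeg]) htop) M
  have hcard : 1 < Nat.card (M ≃ₐ[K] M) := by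
    rw [IsGalois.card_aut_eq_finrank, hdeg]
    exact hpp.one_lt
  obtain ⟨σ₀, hσ₀⟩ := @exists_ne _ (Finite.one_lt_card_iff_nontrivial.1 hcard) (1 : M ≃ₐ[K] M)
  have hone : ∀ i, (1 : M ≃ₐ[K] M) ∈ ramSet p K M i := fun i ↦ by
    simp [hw.mem_ramSet_iff]
  have hlow : ∀ i ≤ t, ∀ σ, σ ∈ ramSet p K M i := by
    intro i hi σ
    rcases eq_or_ne σ 1 with rfl | hσ
    · exact hone i
    obtain ⟨η, hη, hση⟩ := exists_map_eq_isPrimitiveRoot_mul htop hb hα0 hζ hσ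
    rw [hw.mem_ramSet_iff]
    intro x hx
    obtain ⟨c, rfl⟩ := exists_eq_sum_mul_pow hK hα hdeg x
    obtain ⟨-, -, hle⟩ := exists_map_sum_mul_pow_eq hK hα c
    rw [map_sum, ← Finset.sum_sub_distrib]
    refine Valuation.map_sum_le _ fun k _ ↦ ?_
    rcases eq_or_ne (k : ℕ) 0 with hk | hk
    · simp [hk]
    rw [map_apply_sub_self_smul_pow ht hη hση _ hk k.2]
    calc exp (-(t : ℤ)) * w (c k • α ^ (k : ℕ)) ≤ exp (-(t : ℤ)) * exp (-1) :=
          mul_le_mul_right (le_exp_neg_one_of_not_dvd ((hle k).trans hx)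
            (not_dvd_log_smul_pow hK hα hk k.2)) _
      _ ≤ _ := by rw [← exp_add, exp_le_exp]; lia
  have hhigh : ∀ i, t < i → ∀ σ ∈ ramSet p K M i, σ = 1 := by
    intro i hi σ hσi
    by_contra hσ
    obtain ⟨η, hη, hση⟩ := exists_map_eq_isPrimitiveRoot_mul htop hb hα0 hζ hσ
    obtain ⟨π, hπ⟩ := hw.2
    obtain ⟨c, rfl⟩ := exists_eq_sum_mul_pow hK hα hdeg π
    obtain ⟨k, hk, -⟩ := exists_map_sum_mul_pow_eq hK hα c
    rw [hπ] at hk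
    have hk0 : (k : ℕ) ≠ 0 := by
      intro h0
      have h1 := hK (c k)
      rw [h0, pow_zero, Algebra.smul_def, mul_one] at hk
      rw [hk, log_exp, dvd_neg] at h1
      exact hpp.one_lt.ne' (Nat.dvd_one.1 (by exact_mod_cast h1))
    have h := hw.mem_ramSet_iff.1 hσi (c k • α ^ (k : ℕ))
      (by rw [hk, ← exp_zero, exp_le_exp]; lia)
    rw [map_apply_sub_self_smul_pow ht hη hση _ hk0 k.2, hk, ← exp_add, exp_le_exp] at h
    lia
  refine ⟨fun h ↦ hσ₀ (hhigh (t + 1) t.lt_succ_self σ₀ (h ▸ hlow t le_rfl σ₀)), fun t' ht' ↦ ?_⟩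
  by_contra hne
  refine ht' (Set.ext fun σ ↦ ?_)
  rcases lt_or_gt_of_ne hne with h | h
  · exact iff_of_true (hlow _ h.le _) (hlow _ h _)
  · exact ⟨fun h1 ↦ hhigh _ h _ h1 ▸ hone _,
      fun h1 ↦ hhigh _ (h.trans t'.lt_succ_self) _ h1 ▸ hone _⟩

end Jump

/-- Let `p` be an odd prime, `F/ℚ_p` finite unramified, `a ∈ 𝒪_F \ 𝒪_F^p` with
`p ∤ v_F(a)`, and `L_{1,s} = F(ζ_p, a^{1/p^s})`, assumed totally ramified over `F` of
degree `p^s(p-1)`.  Then the unique ramification jump of `L_{1,s+1}/L_{1,s}` equals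
`p^{s+1}`. -/
theorem jump_L1s_of_not_dvd_val (p : ℕ) [Fact p.Prime] (hp : p ≠ 2)
    (F Ω : Type*) [Field F] [Field Ω]
    [Algebra ℚ_[p] F] [FiniteDimensional ℚ_[p] F]
    (hunram : maxIdeal p F = Ideal.span {(p : ringOfInt p F)})
    [Algebra F Ω] [Algebra ℚ_[p] Ω] [IsScalarTower ℚ_[p] F Ω]
    (a : F) (haO : a ∈ ringOfInt p F) (haP : ¬∃ b ∈ ringOfInt p F, b ^ p = a)
    (hv : ¬p ∣ valInt p F a)
    (ζ : Ω) (hζ : IsPrimitiveRoot ζ p)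
    (α : ℕ → Ω) (hα0 : α 0 = algebraMap F Ω a) (hαp : ∀ s, α (s + 1) ^ p = α s)
    (L : ℕ → IntermediateField F Ω)
    (hL : ∀ s, L s = IntermediateField.adjoin F {ζ, α s})
    (hmono : ∀ s, L s ≤ L (s + 1))
    (hdeg : ∀ s, Module.finrank F ↥(L s) = p ^ s * (p - 1))
    (hram : ∀ s, eAbs p ↥(L s) = Module.finrank F ↥(L s) * eAbs p F)
    (s : ℕ) :
    HasUniqueRamJumpHom p ↥(L s) ↥(L (s + 1))
      (IntermediateField.inclusion (hmono s)).toRingHom (p ^ (s + 1)) := by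
  have hpp : p.Prime := Fact.out
  have hp1 : 0 < p - 1 := Nat.sub_pos_of_lt hpp.one_lt
  have hp1' : ((p - 1 : ℕ) : ℤ) = p - 1 := by rw [Nat.cast_sub hpp.one_le, Nat.cast_one]
  have hp0 : (p : ℤ) ≠ 0 := by exact_mod_cast hpp.ne_zero
  have hfd : ∀ s, FiniteDimensional ℚ_[p] (L s) := fun s ↦ by
    have : FiniteDimensional F (L s) :=
      .of_finrank_pos (hdeg s ▸ Nat.mul_pos (Nat.pow_pos hpp.pos) hp1)
    exact Module.Finite.trans F (L s)
  have hζL : ∀ s, ζ ∈ L s := fun s ↦ hL s ▸ IntermediateField.subset_adjoin _ _ (by simp)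
  have hαL : ∀ s, α s ∈ L s := fun s ↦ hL s ▸ IntermediateField.subset_adjoin _ _ (by simp)
  obtain ⟨wF, hwF⟩ := exists_isNormalizedVal p F
  have hwFp := hwF.log_prime_of_unramified hunram
  have heF : eAbs p F = 1 := by
    have := hwF.log_prime
    lia
  have he : ∀ s, (eAbs p (L s) : ℤ) = (p : ℤ) ^ s * (p - 1) := fun s ↦ by
    rw [hram, hdeg, heF, mul_one, Nat.cast_mul, Nat.cast_pow, hp1']
  have ha0 : a ≠ 0 := by
    rintro rfl
    exact haP ⟨0, zero_mem _, zero_pow hpp.ne_zero⟩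
  have hva := hwF.log_eq_neg_valInt ha0 haO
  obtain ⟨v, hv'⟩ := exists_isNormalizedVal p (L s)
  obtain ⟨w, hw⟩ := exists_isNormalizedVal p (L (s + 1))
  have hwp := hw.log_prime
  have hvp := hv'.log_prime
  rw [he] at hwp hvp
  let f : L s →ₐ[F] L (s + 1) := IntermediateField.inclusion (hmono s)
  let _ : Algebra (L s) (L (s + 1)) := f.toRingHom.toAlgebra
  have : IsScalarTower F (L s) (L (s + 1)) := .of_algebraMap_eq fun x ↦ (f.commutes x).symm
  have hdegM : Module.finrank (L s) (L (s + 1)) = p := by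
    have h := Module.finrank_mul_finrank F (L s) (L (s + 1))
    rw [hdeg, hdeg, pow_succ] at h
    refine Nat.eq_of_mul_eq_mul_left (Nat.mul_pos (Nat.pow_pos hpp.pos) hp1 : 0 < p ^ s * (p - 1)) ?_
    rw [h]
    ring
  change HasUniqueRamJump p (L s) (L (s + 1)) (p ^ (s + 1))
  have hlogK : ∀ c : L s, log (w (f c)) = p * log (v c) := fun c ↦ by
    have h := hv'.log_map hw (f.restrictScalars ℚ_[p]) c
    rw [hwp, hvp] at h
    have hne : (p : ℤ) ^ s * (p - 1) ≠ 0 := mul_ne_zero (pow_ne_zero _ hp0) (by lia)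
    refine mul_right_cancel₀ (neg_ne_zero.2 hne) ?_
    rw [AlgHom.restrictScalars_apply] at h
    rw [h]
    ring
  have hαpow : ∀ s, α s ^ p ^ s = algebraMap F Ω a := fun s ↦ by
    induction s with
    | zero => simpa using hα0
    | succ s ih => rw [pow_succ', pow_mul, hαp, ih]
  let β : L (s + 1) := ⟨α (s + 1), hαL (s + 1)⟩
  have hβ : log (w β) = -((p - 1) * valInt p F a) := by
    have h := hwF.log_map hw (IsScalarTower.toAlgHom ℚ_[p] F (L (s + 1))) a
    have hβa : β ^ p ^ (s + 1) = algebraMap F (L (s + 1)) a := Subtype.ext (hαpow (s + 1))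
    rw [hva, hwFp, hwp, IsScalarTower.coe_toAlgHom', ← hβa, map_pow, log_pow, nsmul_eq_mul,
      Nat.cast_pow] at h
    refine mul_left_cancel₀ (pow_ne_zero (s + 1) hp0) ?_
    linarith
  refine hasUniqueRamJump_of_kummer hw (α := β) (b := ⟨α s, hαL s⟩) (ζ := ⟨ζ, hζL s⟩)
    (fun c ↦ ⟨_, hlogK c⟩) ?_ hdegM (Subtype.ext (hαp s)) ?_ fun η hη ↦ ?_
  · rw [hβ, dvd_neg]
    intro h
    rcases (Nat.prime_iff_prime_int.1 hpp).dvd_or_dvd h with h | h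
    · rw [← hp1'] at h
      exact absurd (Nat.le_of_dvd hp1 (Int.natCast_dvd_natCast.1 h)) (by lia)
    · exact hv (Int.natCast_dvd_natCast.1 h)
  · exact IsPrimitiveRoot.of_map_of_injective (f := (L s).val) hζ (L s).val.injective
  · have hη' := hη.map_of_injective (algebraMap (L s) (L (s + 1))).injective
    have h := log_map_sub_one_of_isPrimitiveRoot w hpp hη'
    have h0 : algebraMap (L s) (L (s + 1)) η - 1 ≠ 0 :=
      sub_ne_zero.2 (hη'.ne_one hpp.one_lt)
    rw [← exp_log ((Valuation.ne_zero_iff w).2 h0), exp_inj, Nat.cast_pow]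
    refine mul_left_cancel₀ (show (p : ℤ) - 1 ≠ 0 by lia) ?_
    rw [h, hwp]
    ring
end
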